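/- arXiv:2210.06692 — 3 statements merged into one kernel-verified Lean document; each statement's English description precedes it below -/
import Mathlib

section
/- (Theorem 3, second bullet) For any fixed integer N ≥ 1 and any 1 ≤ k < N, the fixed points satisfy Q^π_{N,k}(s,a) ≤ Q^π_{N,k+1}(s,a) for all (s,a); that is, for fixed N the fixed point Q^π_{N,k} element-wise increases with k. -/
/-- `kmin x k` is the entry in position `k` (0-indexed) of a monotone nondecreasing
sorted arrangement of the tuple `x`, i.e. the `(k+1)`-th smallest entry counted with
multiplicity. -/
noncomputable def kmin {N : ℕ} (x : Fin N → ℝ) (k : Fin N) : ℝ := x (Tuple.sort x k)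

/-- A probability mass function on a finite type: nonnegative and summing to one. -/
def IsPMF {α : Type*} [Fintype α] (p : α → ℝ) : Prop :=
  (∀ a, 0 ≤ p a) ∧ ∑ a, p a = 1

/-- Sup norm `‖Q‖_∞ = max_{(s,a)} |Q(s,a)|` on `S × A → ℝ` (curried). -/
noncomputable def supNorm {S A : Type*} [Fintype S] [Fintype A] [Nonempty S] [Nonempty A]
    (Q : S → A → ℝ) : ℝ :=
  Finset.univ.sup' Finset.univ_nonempty (fun p : S × A => |Q p.1 p.2|)

/-- The `(N,k)`-pessimistic Bellman operator (with `k` given 0-indexed as `k : Fin N`):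
`(B^π_{N,k} Q)(s,a) = r(s,a) + γ · Σ_{v : Fin N → ι} (Π_j P(v_j)) ·
  kmin_k( j ↦ Σ_{s'} M(v_j)(s,a)(s') · Σ_{a'} π(a'|s') · Q(s',a') )`. -/
noncomputable def pessBellman {S A ι : Type*} [Fintype S] [Fintype A] [Fintype ι]
    (r : S → A → ℝ) (γ : ℝ) (P : ι → ℝ) (M : ι → S → A → S → ℝ)
    (π : S → A → ℝ) (N : ℕ) (k : Fin N) (Q : S → A → ℝ) : S → A → ℝ :=
  fun s a => r s a + γ * ∑ v : Fin N → ι, (∏ j, P (v j)) *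
    kmin (fun j => ∑ s', M (v j) s a s' * ∑ a', π s' a' * Q s' a') k

open Finset

section kmin

variable {N : ℕ} {x y : Fin N → ℝ} {i j : Fin N}

lemma kmin_le_iff_lt_card {c : ℝ} : kmin x i ≤ c ↔ (i : ℕ) < #{j | x j ≤ c} := by
  have card_sorted : #{j | (x ∘ Tuple.sort x) j ≤ c} = #{j | x j ≤ c} :=
    card_equiv (Tuple.sort x) (by simp)
  rw [← card_sorted, Tuple.lt_card_le_iff_apply_le_of_monotone (Tuple.monotone_sort x)]
  rfl

lemma kmin_le_kmin (hxy : x ≤ y) (hij : i ≤ j) : kmin x i ≤ kmin y j := by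
  have below_y : (j : ℕ) < #{l | y l ≤ kmin y j} := kmin_le_iff_lt_card.1 le_rfl
  refine kmin_le_iff_lt_card.2 ((Fin.le_def.1 hij).trans_lt (below_y.trans_le ?_))
  gcongr with l
  exact hxy l

lemma kmin_add_const (x : Fin N → ℝ) (c : ℝ) (i : Fin N) :
    kmin (fun j => x j + c) i = kmin x i + c :=
  eq_of_forall_ge_iff fun b => by simp only [← le_sub_iff_add_le, kmin_le_iff_lt_card]

end kmin

lemma sum_mul_add_const_of_sum_eq_one {α R : Type*} [Fintype α] [NonAssocSemiring R] {p : α → R}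
    (hp : ∑ a, p a = 1) (f : α → R) (c : R) :
    ∑ a, p a * (f a + c) = ∑ a, p a * f a + c := by
  simp only [mul_add, sum_add_distrib, ← sum_mul, hp, one_mul]

/-- The hypotheses on `T` are Blackwell's conditions for a contraction. Evaluating at a maximizer
of `U - V` compares `U` with `V` without iterating `T`. -/
lemma le_of_le_map_of_map_le_of_discounting {S A : Type*} [Finite S] [Finite A]
    {T : (S → A → ℝ) → S → A → ℝ} {γ : ℝ} {U V : S → A → ℝ} (hT : Monotone T)
    (hdisc : ∀ c, 0 ≤ c → T (fun s a => V s a + c) ≤ fun s a => T V s a + γ * c)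
    (hγ : γ < 1) (hU : U ≤ T U) (hV : T V ≤ V) : U ≤ V := by
  intro s a
  have : Nonempty (S × A) := ⟨(s, a)⟩
  obtain ⟨⟨s₀, a₀⟩, hmax⟩ := Finite.exists_max fun p : S × A => U p.1 p.2 - V p.1 p.2
  set d := U s₀ a₀ - V s₀ a₀
  have le_add_max : U ≤ fun s a => V s a + d := fun s a => sub_le_iff_le_add'.1 (hmax (s, a))
  suffices d ≤ 0 from sub_nonpos.1 ((hmax (s, a)).trans this)
  by_contra! hd_pos
  have contracted : d ≤ γ * d := sub_le_iff_le_add'.2 <|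
    calc U s₀ a₀ ≤ T U s₀ a₀ := hU s₀ a₀
      _ ≤ T (fun s a => V s a + d) s₀ a₀ := hT le_add_max s₀ a₀
      _ ≤ T V s₀ a₀ + γ * d := hdisc d hd_pos.le s₀ a₀
      _ ≤ V s₀ a₀ + γ * d := by gcongr; exact hV s₀ a₀
  exact contracted.not_gt (mul_lt_of_lt_one_left hd_pos hγ)

section pessBellman

variable {S A ι : Type*} [Fintype S] [Fintype A] [Fintype ι] {r : S → A → ℝ} {γ : ℝ}
  {P : ι → ℝ} {M : ι → S → A → S → ℝ} {π : S → A → ℝ} {N : ℕ} {i j : Fin N} {Q Q' : S → A → ℝ}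

lemma pessBellman_le_pessBellman (hγ : 0 ≤ γ) (hP : 0 ≤ P) (hM : 0 ≤ M) (hπ : 0 ≤ π)
    (hij : i ≤ j) (hQ : Q ≤ Q') :
    pessBellman r γ P M π N i Q ≤ pessBellman r γ P M π N j Q' := by
  intro s a
  unfold pessBellman
  gcongr with v
  · exact prod_nonneg fun l _ => hP (v l)
  refine kmin_le_kmin (fun l => ?_) hij
  gcongr with s' _ a'
  · exact hM (v l) s a s'
  · exact hπ s' a'
  · exact hQ s' a'

lemma pessBellman_add_const (hP : ∑ v, P v = 1) (hM : ∀ v s a, ∑ s', M v s a s' = 1)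
    (hπ : ∀ s, ∑ a, π s a = 1) (c : ℝ) :
    pessBellman r γ P M π N i (fun s a => Q s a + c) =
      fun s a => pessBellman r γ P M π N i Q s a + γ * c := by
  have sum_prod_eq_one : ∑ v : Fin N → ι, ∏ l, P (v l) = 1 := by
    rw [← Fintype.sum_pow, hP, one_pow]
  funext s a
  simp only [pessBellman, sum_mul_add_const_of_sum_eq_one (hπ _),
    sum_mul_add_const_of_sum_eq_one (hM _ _ _), kmin_add_const,
    sum_mul_add_const_of_sum_eq_one sum_prod_eq_one]
  ring

theorem pessBellman_fixedPoint_mono_k_general (hγ0 : 0 ≤ γ) (hγ1 : γ < 1)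
    (hπ : ∀ s, IsPMF (π s)) (hP : IsPMF P) (hM : ∀ v s a, IsPMF (M v s a)) (hij : i ≤ j)
    (hQ : Q ≤ pessBellman r γ P M π N i Q) (hQ' : pessBellman r γ P M π N j Q' ≤ Q') :
    Q ≤ Q' := by
  have bellman_le {k l : Fin N} (hkl : k ≤ l) {U V : S → A → ℝ} (hUV : U ≤ V) :
      pessBellman r γ P M π N k U ≤ pessBellman r γ P M π N l V :=
    pessBellman_le_pessBellman hγ0 hP.1 (fun v s a => (hM v s a).1) (fun s => (hπ s).1) hkl hUV
  exact le_of_le_map_of_map_le_of_discounting (fun _ _ => bellman_le le_rfl)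
    (fun c _ => (pessBellman_add_const hP.2 (fun v s a => (hM v s a).2) (fun s => (hπ s).2) c).le)
    hγ1 (hQ.trans (bellman_le hij le_rfl)) hQ'

end pessBellman

/-- Theorem 3, second bullet: for fixed `N ≥ 1` and `1 ≤ k < N`, the fixed points of the
`(N,k)`- and `(N,k+1)`-pessimistic Bellman operators satisfy
`Q^π_{N,k}(s,a) ≤ Q^π_{N,k+1}(s,a)` for all `(s,a)`. -/
theorem pessBellman_fixedPoint_mono_k {S A ι : Type*} [Fintype S] [Fintype A] [Fintype ι]
    (r : S → A → ℝ) (γ : ℝ) (hγ0 : 0 ≤ γ) (hγ1 : γ < 1)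
    (π : S → A → ℝ) (hπ : ∀ s, IsPMF (π s))
    (P : ι → ℝ) (hP : IsPMF P)
    (M : ι → S → A → S → ℝ) (hM : ∀ v s a, IsPMF (M v s a))
    (N k : ℕ) (hk1 : 1 ≤ k) (hkN : k < N)
    (Q1 Q2 : S → A → ℝ)
    (hQ1 : pessBellman r γ P M π N ⟨k - 1, by omega⟩ Q1 = Q1)
    (hQ2 : pessBellman r γ P M π N ⟨k + 1 - 1, by omega⟩ Q2 = Q2) :
    ∀ s a, Q1 s a ≤ Q2 s a := by
  exact pessBellman_fixedPoint_mono_k_general hγ0 hγ1 hπ hP hM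
    (Fin.mk_le_mk.2 (Nat.sub_le_sub_right k.le_succ 1)) hQ1.ge hQ2.le
end

section
/- (Theorem 4, contraction part) The soft (N,k)-pessimistic Bellman operator is a γ-contraction for the sup norm: for all Q1, Q2 : S × A → ℝ, ‖B̄*_{N,k;μ} Q1 − B̄*_{N,k;μ} Q2‖_∞ ≤ γ · ‖Q1 − Q2‖_∞. Consequently it has a unique fixed point Q̄*_{N,k;μ}, and for any starting Q the iterates (B̄*_{N,k;μ})^n Q converge to Q̄*_{N,k;μ} in sup norm. -/
/-- Kullback–Leibler divergence `KL(p‖q) = Σ_a p(a)·log(p(a)/q(a))` on a finite type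
(with the convention `0·log 0 = 0`, automatic here). -/
noncomputable def KLdiv {α : Type*} [Fintype α] (p q : α → ℝ) : ℝ :=
  ∑ a, p a * Real.log (p a / q a)

/-- The soft `(N,k)`-pessimistic Bellman operator with reference policy `μ` and
coefficient `α` (with `k` given 0-indexed as `k : Fin N`):
`(B̄*_{N,k;μ} Q)(s,a) = r(s,a) + γ · Σ_{v} (Π_j P(v_j)) ·
  kmin_k( j ↦ Σ_{s'} M(v_j)(s,a)(s') · α·log Σ_{a'} μ(a'|s')·exp(Q(s',a')/α) )`. -/
noncomputable def softBellman {S A ι : Type*} [Fintype S] [Fintype A] [Fintype ι]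
    (r : S → A → ℝ) (γ : ℝ) (P : ι → ℝ) (M : ι → S → A → S → ℝ)
    (μ : S → A → ℝ) (α : ℝ) (N : ℕ) (k : Fin N) (Q : S → A → ℝ) : S → A → ℝ :=
  fun s a => r s a + γ * ∑ v : Fin N → ι, (∏ j, P (v j)) *
    kmin (fun j => ∑ s', M (v j) s a s' *
      (α * Real.log (∑ a', μ s' a' * Real.exp (Q s' a' / α)))) k

/-- The regularized `(N,k)`-pessimistic evaluation operator for policy `π`, reference
policy `μ` and coefficient `α` (with `k` given 0-indexed as `k : Fin N`):
`(B̄^π_{N,k;μ} Q)(s,a) = r(s,a) + γ · Σ_{v} (Π_j P(v_j)) ·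
  kmin_k( j ↦ Σ_{s'} M(v_j)(s,a)(s') · (Σ_{a'} π(a'|s')·Q(s',a') − α·KL(π(·|s')‖μ(·|s'))) )`. -/
noncomputable def regBellman {S A ι : Type*} [Fintype S] [Fintype A] [Fintype ι]
    (r : S → A → ℝ) (γ : ℝ) (P : ι → ℝ) (M : ι → S → A → S → ℝ)
    (π μ : S → A → ℝ) (α : ℝ) (N : ℕ) (k : Fin N) (Q : S → A → ℝ) : S → A → ℝ :=
  fun s a => r s a + γ * ∑ v : Fin N → ι, (∏ j, P (v j)) *
    kmin (fun j => ∑ s', M (v j) s a s' *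
      ((∑ a', π s' a' * Q s' a') - α * KLdiv (π s') (μ s'))) k

/-!
Maps `(κ → ℝ) → ℝ` that are monotone and commute with adding a constant to every entry are
`1`-Lipschitz for the sup norm, because `x ≤ y + dist x y` (Blackwell's criterion). Order
statistics, weighted means and the scaled log-sum-exp all have these two properties, and the
properties survive composition. So the soft Bellman operator is, entry by entry, a constant plus
`γ` times such a map of `Q`, and Banach's fixed point theorem applies.
-/

/-- A *topical* map in the sense of nonlinear Perron–Frobenius theory: monotone and additively
homogeneous. It isolates the two properties that make an aggregation of values nonexpansive. -/
structure IsTopical {κ : Type*} (f : (κ → ℝ) → ℝ) : Prop where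
  monotone : Monotone f
  map_add_const : ∀ x c, f (fun i => x i + c) = f x + c

namespace IsTopical

variable {κ κ' : Type*} {f : (κ → ℝ) → ℝ}

theorem comp (hf : IsTopical f) {g : κ → (κ' → ℝ) → ℝ} (hg : ∀ i, IsTopical (g i)) :
    IsTopical (fun x => f (fun i => g i x)) where
  monotone _ _ hxy := hf.monotone fun i => (hg i).monotone hxy
  map_add_const x c := by simp only [(hg _).map_add_const, hf.map_add_const]

-- For `α < 0` both scalings reverse the order, so their composite with `f` is still monotone.
theorem rescale (hf : IsTopical f) {α : ℝ} (hα : α ≠ 0) :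
    IsTopical (fun x => α * f (fun i => x i / α)) where
  monotone x y hxy := by
    rcases hα.lt_or_gt with hneg | hpos
    · exact mul_le_mul_of_nonpos_left
        (hf.monotone fun i => div_le_div_of_nonpos_of_le hneg.le (hxy i)) hneg.le
    · exact mul_le_mul_of_nonneg_left
        (hf.monotone fun i => div_le_div_of_nonneg_right (hxy i) hpos.le) hpos.le
  map_add_const x c := by
    simp only [add_div, hf.map_add_const, mul_add, mul_div_cancel₀ c hα]

theorem lipschitzWith_one [Fintype κ] (hf : IsTopical f) : LipschitzWith 1 f :=
  LipschitzWith.of_le_add fun x y =>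
    calc f x ≤ f (fun i => y i + dist x y) := hf.monotone fun i => by
          have hi : |x i - y i| ≤ dist x y := dist_le_pi_dist x y i
          linarith [le_abs_self (x i - y i)]
      _ = f y + dist x y := hf.map_add_const y _

end IsTopical

section OrderStatistic

variable {N : ℕ}

theorem kmin_le_iff (x : Fin N → ℝ) (k : Fin N) (a : ℝ) :
    kmin x k ≤ a ↔ (k : ℕ) < Finset.card {i | x i ≤ a} := by
  have hcard : Finset.card {i | x (Tuple.sort x i) ≤ a} = Finset.card {i | x i ≤ a} :=
    Finset.card_equiv (Tuple.sort x) (by simp)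
  rw [← hcard]
  exact (Tuple.lt_card_le_iff_apply_le_of_monotone (Tuple.monotone_sort x)).symm

theorem kmin_mono (k : Fin N) : Monotone (fun x : Fin N → ℝ => kmin x k) := by
  intro x y hxy
  refine (kmin_le_iff x k _).2 (((kmin_le_iff y k _).1 le_rfl).trans_le (Finset.card_le_card ?_))
  exact Finset.monotone_filter_right _ fun i _ hi => (hxy i).trans hi

theorem kmin_comp_of_monotone {g : ℝ → ℝ} (hg : Monotone g) (x : Fin N → ℝ) (k : Fin N) :
    kmin (g ∘ x) k = g (kmin x k) :=
  have hsorted : Monotone ((g ∘ x) ∘ Tuple.sort x) := hg.comp (Tuple.monotone_sort x)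
  (congrFun (Tuple.comp_sort_eq_comp_iff_monotone.2 hsorted) k).symm

theorem isTopical_kmin (k : Fin N) : IsTopical (fun x : Fin N → ℝ => kmin x k) where
  monotone := kmin_mono k
  map_add_const x c := kmin_comp_of_monotone (add_left_mono (a := c)) x k

end OrderStatistic

namespace IsPMF

theorem isTopical_sum_mul {β : Type*} [Fintype β] {p : β → ℝ} (hp : IsPMF p) :
    IsTopical (fun x => ∑ b, p b * x b) where
  monotone _ _ hxy := Finset.sum_le_sum fun b _ => mul_le_mul_of_nonneg_left (hxy b) (hp.1 b)
  map_add_const x c := by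
    simp only [mul_add, Finset.sum_add_distrib, ← Finset.sum_mul, hp.2, one_mul]

theorem pi {κ : Type*} [Fintype κ] [DecidableEq κ] {β : κ → Type*} [∀ i, Fintype (β i)]
    {p : ∀ i, β i → ℝ} (hp : ∀ i, IsPMF (p i)) :
    IsPMF (fun v : ∀ i, β i => ∏ i, p i (v i)) where
  left v := Finset.prod_nonneg fun i _ => (hp i).1 (v i)
  right := by simp only [← Fintype.prod_sum, (hp _).2, Finset.prod_const_one]

end IsPMF

section LogSumExp

variable {A : Type*} [Fintype A] {w : A → ℝ}

theorem sum_mul_exp_pos (hw : 0 < w) (x : A → ℝ) : 0 < ∑ a, w a * Real.exp (x a) := by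
  obtain ⟨hnonneg, a, ha⟩ := Pi.lt_def.1 hw
  exact Finset.sum_pos' (fun b _ => mul_nonneg (hnonneg b) (Real.exp_pos _).le)
    ⟨a, Finset.mem_univ a, mul_pos ha (Real.exp_pos _)⟩

theorem isTopical_log_sum_mul_exp (hw : 0 < w) :
    IsTopical (fun x => Real.log (∑ a, w a * Real.exp (x a))) where
  monotone x y hxy := Real.log_le_log (sum_mul_exp_pos hw x) <| Finset.sum_le_sum fun a _ =>
    mul_le_mul_of_nonneg_left (Real.exp_le_exp.2 (hxy a)) (hw.le a)
  map_add_const x c := by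
    simp only [Real.exp_add, ← mul_assoc, ← Finset.sum_mul]
    rw [Real.log_mul (sum_mul_exp_pos hw x).ne' (Real.exp_pos c).ne', Real.log_exp]

end LogSumExp

section Bellman

variable {S A ι : Type*} [Fintype S] [Fintype A] [Fintype ι]

/-- The pessimistic expected next-state value of `V` at one state-action pair: `N` models are drawn
independently from the belief `P`, and the `k`-th smallest (0-indexed) of the expectations of `V`
under their next-state distributions `p` is averaged over the draw. -/
noncomputable def pessimisticValue (P : ι → ℝ) (p : ι → S → ℝ) {N : ℕ} (k : Fin N)
    (V : S → ℝ) : ℝ :=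
  ∑ v : Fin N → ι, (∏ j, P (v j)) * kmin (fun j => ∑ s', p (v j) s' * V s') k

theorem isTopical_pessimisticValue {P : ι → ℝ} (hP : IsPMF P) {p : ι → S → ℝ}
    (hp : ∀ i, IsPMF (p i)) {N : ℕ} (k : Fin N) : IsTopical (pessimisticValue P p k) :=
  (IsPMF.pi fun _ => hP).isTopical_sum_mul.comp fun v =>
    (isTopical_kmin k).comp fun j => (hp (v j)).isTopical_sum_mul

/-- The soft maximum `α log Σ_a w(a) exp(x(a)/α)` of `x` with weights `w` at temperature `α`; a soft
minimum for `α < 0`. -/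
noncomputable def softMax (w : A → ℝ) (α : ℝ) (x : A → ℝ) : ℝ :=
  α * Real.log (∑ a, w a * Real.exp (x a / α))

theorem isTopical_softMax {w : A → ℝ} (hw : 0 < w) {α : ℝ} (hα : α ≠ 0) :
    IsTopical (softMax w α) :=
  (isTopical_log_sum_mul_exp hw).rescale hα

theorem softBellman_apply (r : S → A → ℝ) (γ : ℝ) (P : ι → ℝ) (M : ι → S → A → S → ℝ)
    (μ : S → A → ℝ) (α : ℝ) {N : ℕ} (k : Fin N) (Q : S → A → ℝ) (s : S) (a : A) :
    softBellman r γ P M μ α N k Q s a =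
      r s a + γ * pessimisticValue P (fun i => M i s a) k (fun s' => softMax (μ s') α (Q s')) :=
  rfl

theorem lipschitzWith_softBellman (r : S → A → ℝ) (γ : ℝ) {P : ι → ℝ} (hP : IsPMF P)
    {M : ι → S → A → S → ℝ} (hM : ∀ i s a, IsPMF (M i s a)) {μ : S → A → ℝ} (hμ : ∀ s, 0 < μ s)
    {α : ℝ} (hα : α ≠ 0) {N : ℕ} (k : Fin N) :
    LipschitzWith ‖γ‖₊ (softBellman r γ P M μ α N k) := by
  refine LipschitzWith.of_dist_le_mul fun Q₁ Q₂ => ?_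
  let V (Q : S → A → ℝ) (s : S) : ℝ := softMax (μ s) α (Q s)
  have hV : dist (V Q₁) (V Q₂) ≤ dist Q₁ Q₂ := (dist_pi_le_iff dist_nonneg).2 fun s =>
    ((isTopical_softMax (hμ s) hα).lipschitzWith_one.dist_le_mul _ _).trans <| by
      simpa using dist_le_pi_dist Q₁ Q₂ s
  refine (dist_pi_le_iff (by positivity)).2 fun s => (dist_pi_le_iff (by positivity)).2 fun a => ?_
  let F : (S → ℝ) → ℝ := pessimisticValue P (fun i => M i s a) k
  have hF : dist (F (V Q₁)) (F (V Q₂)) ≤ dist (V Q₁) (V Q₂) := by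
    simpa using
      (isTopical_pessimisticValue hP (hM · s a) k).lipschitzWith_one.dist_le_mul (V Q₁) (V Q₂)
  calc dist (softBellman r γ P M μ α N k Q₁ s a) (softBellman r γ P M μ α N k Q₂ s a)
      = ‖γ‖ * dist (F (V Q₁)) (F (V Q₂)) := by
        rw [softBellman_apply, softBellman_apply, dist_add_left, Real.dist_eq, ← mul_sub, abs_mul]
        rfl
    _ ≤ ‖γ‖ * dist Q₁ Q₂ := by gcongr; exact hF.trans hV

end Bellman

section SupNorm

variable {S A : Type*} [Fintype S] [Fintype A] [Nonempty S] [Nonempty A]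

theorem supNorm_le_iff {Q : S → A → ℝ} {c : ℝ} : supNorm Q ≤ c ↔ ∀ s a, |Q s a| ≤ c := by
  simp [supNorm]

theorem supNorm_eq_norm (Q : S → A → ℝ) : supNorm Q = ‖Q‖ :=
  eq_of_forall_ge_iff fun c => by
    simp only [supNorm_le_iff, pi_norm_le_iff_of_nonempty, Real.norm_eq_abs]

theorem supNorm_sub_eq_dist (Q₁ Q₂ : S → A → ℝ) :
    supNorm (fun s a => Q₁ s a - Q₂ s a) = dist Q₁ Q₂ :=
  (supNorm_eq_norm _).trans (dist_eq_norm Q₁ Q₂).symm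

end SupNorm

theorem softBellman_contraction_general {S A ι : Type*} [Fintype S] [Fintype A] [Fintype ι]
    [Nonempty S] [Nonempty A]
    (r : S → A → ℝ) (γ : ℝ) (hγ : |γ| < 1)
    (μ : S → A → ℝ) (hμ : ∀ s, 0 < μ s)
    (α : ℝ) (hα : α ≠ 0)
    (P : ι → ℝ) (hP : IsPMF P)
    (M : ι → S → A → S → ℝ) (hM : ∀ v s a, IsPMF (M v s a))
    {N : ℕ} (k : Fin N) :
    (∀ Q1 Q2 : S → A → ℝ,
      supNorm (fun s a => softBellman r γ P M μ α N k Q1 s a - softBellman r γ P M μ α N k Q2 s a)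
        ≤ |γ| * supNorm (fun s a => Q1 s a - Q2 s a)) ∧
    (∃! Qfix : S → A → ℝ, softBellman r γ P M μ α N k Qfix = Qfix) ∧
    (∀ Qfix : S → A → ℝ, softBellman r γ P M μ α N k Qfix = Qfix →
      ∀ Q : S → A → ℝ,
        Filter.Tendsto
          (fun n => supNorm (fun s a => (softBellman r γ P M μ α N k)^[n] Q s a - Qfix s a))
          Filter.atTop (nhds 0)) := by
  have hlip := lipschitzWith_softBellman r γ hP hM hμ hα k
  have hcontr : ContractingWith ‖γ‖₊ (softBellman r γ P M μ α N k) := ⟨by exact_mod_cast hγ, hlip⟩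
  simp only [supNorm_sub_eq_dist]
  refine ⟨hlip.dist_le_mul, ⟨_, hcontr.fixedPoint_isFixedPt, fun _ => hcontr.fixedPoint_unique⟩,
    fun Qfix hfix Q => ?_⟩
  rw [hcontr.fixedPoint_unique hfix]
  exact tendsto_iff_dist_tendsto_zero.1 (hcontr.tendsto_iterate_fixedPoint Q)

/-- Theorem 4, contraction part: the soft `(N,k)`-pessimistic Bellman operator is a
`γ`-contraction for the sup norm; consequently it has a unique fixed point, and from any
starting point the iterates converge to the fixed point in sup norm. -/
theorem softBellman_contraction {S A ι : Type*} [Fintype S] [Fintype A] [Fintype ι]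
    [Nonempty S] [Nonempty A] [Nonempty ι]
    (r : S → A → ℝ) (γ : ℝ) (hγ0 : 0 ≤ γ) (hγ1 : γ < 1)
    (μ : S → A → ℝ) (hμ : ∀ s, IsPMF (μ s)) (hμpos : ∀ s a, 0 < μ s a)
    (α : ℝ) (hα : 0 < α)
    (P : ι → ℝ) (hP : IsPMF P)
    (M : ι → S → A → S → ℝ) (hM : ∀ v s a, IsPMF (M v s a))
    (N : ℕ) (hN : 1 ≤ N) (k : ℕ) (hk1 : 1 ≤ k) (hkN : k ≤ N) :
    (∀ Q1 Q2 : S → A → ℝ,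
      supNorm (fun s a => softBellman r γ P M μ α N ⟨k - 1, by omega⟩ Q1 s a
          - softBellman r γ P M μ α N ⟨k - 1, by omega⟩ Q2 s a)
        ≤ γ * supNorm (fun s a => Q1 s a - Q2 s a)) ∧
    (∃! Qfix : S → A → ℝ, softBellman r γ P M μ α N ⟨k - 1, by omega⟩ Qfix = Qfix) ∧
    (∀ Qfix : S → A → ℝ, softBellman r γ P M μ α N ⟨k - 1, by omega⟩ Qfix = Qfix →
      ∀ Q : S → A → ℝ,
        Filter.Tendsto
          (fun n => supNorm
            (fun s a => (softBellman r γ P M μ α N ⟨k - 1, by omega⟩)^[n] Q s a - Qfix s a))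
          Filter.atTop (nhds 0)) := by
  simpa only [abs_of_nonneg hγ0] using softBellman_contraction_general r γ
    ((abs_of_nonneg hγ0).trans_lt hγ1) μ (fun s => StrongLT.lt (hμpos s)) α hα.ne' P hP M hM
    ⟨k - 1, by omega⟩
end

section
/- (Theorem 2, order-statistic expectation identity) Let (Ω, 𝓕, P) be a probability space, let g : Ω → ℝ be measurable and integrable with respect to P, let N ≥ 1 and 1 ≤ k ≤ N be integers, let F(t) := P({ω : g(ω) ≤ t}) be the cumulative distribution function of g, and assume the law of g under P (the pushforward measure g_*P on ℝ) is atomless. Then ∫_{Ω^N} kmin_k( j ↦ g(ω_j) ) d(P^{⊗N})(ω) = (N! / ((k−1)!·(N−k)!)) · ∫_Ω g(ω) · F(g(ω))^{k−1} · (1 − F(g(ω)))^{N−k} dP(ω), where P^{⊗N} is the N-fold product measure on Ω^N. -/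
open MeasureTheory

/-!
Independent draws `x` from an atomless law `μ` are almost surely pairwise distinct, and then the
order statistic of 0-indexed rank `k` is the only `x i` with exactly `k` entries below it. Given
`x i = t`, the number of the other `n` entries below `t` is binomial with success probability
`μ (Iio t)`. Summing over the `n + 1` choices of `i` exhibits the law of the order statistic as `μ`
with an explicit density, and the expectation formula is integration of the identity against it.
-/

section OrderStatistics

open Set Finset

lemma card_filter_comp_equiv {ι κ : Type*} [Fintype ι] [Fintype κ] (e : ι ≃ κ) (p : κ → Prop)
    [DecidablePred p] : #{i | p (e i)} = #{j | p j} := by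
  simp only [card_filter, e.sum_comp fun j => if p j then 1 else 0]

section Rank

variable {N : ℕ} (x : Fin N → ℝ) (k : Fin N)

lemma kmin_le_iff_s19 (t : ℝ) : kmin x k ≤ t ↔ k < #{j | x j ≤ t} := by
  rw [← card_filter_comp_equiv (Tuple.sort x)]
  exact (Tuple.lt_card_le_iff_apply_le_of_monotone (Tuple.monotone_sort x)).symm

lemma kmin_lt_iff (t : ℝ) : kmin x k < t ↔ k < #{j | x j < t} := by
  rw [← card_filter_comp_equiv (Tuple.sort x)]
  exact (Tuple.lt_card_lt_iff_apply_lt_of_monotone (Tuple.monotone_sort x)).symm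

variable {x} in
lemma kmin_eq_apply_iff (hx : Function.Injective x) (i : Fin N) :
    kmin x k = x i ↔ #{j | x j < x i} = k := by
  have card_le : #{j | x j ≤ x i} = #{j | x j < x i} + 1 := by
    rw [← card_insert_of_notMem (a := i) (by simp)]
    congr 1
    ext j
    simp [le_iff_eq_or_lt, hx.eq_iff]
  rw [le_antisymm_iff, ← not_lt (a := kmin x k), kmin_le_iff_s19, kmin_lt_iff, card_le]
  omega

end Rank

lemma measurable_card_filter {α ι : Type*} [MeasurableSpace α] [Fintype ι] {p : ι → α → Prop}
    [∀ a, DecidablePred (p · a)] (hp : ∀ i, MeasurableSet {a | p i a}) :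
    Measurable fun a => #{i | p i a} := by
  simp only [card_filter]
  exact Finset.measurable_sum _ fun i _ => .ite (hp i) measurable_const measurable_const

lemma measurable_kmin {N : ℕ} (k : Fin N) : Measurable fun x => kmin x k := by
  refine measurable_of_Iic fun t => ?_
  simp only [Set.preimage, Set.mem_Iic, kmin_le_iff_s19]
  exact measurableSet_lt measurable_const <| measurable_card_filter fun j =>
    measurableSet_le (measurable_pi_apply j) measurable_const

lemma pi_setOf_card_mem_eq {ι α : Type*} [Fintype ι] [MeasurableSpace α] (μ : Measure α)
    [SigmaFinite μ] {A : Set α} [DecidablePred (· ∈ A)] (hA : MeasurableSet A) (m : ℕ) :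
    Measure.pi (fun _ : ι => μ) {x | #{i | x i ∈ A} = m} =
      (Fintype.card ι).choose m * (μ A ^ m * μ Aᶜ ^ (Fintype.card ι - m)) := by
  classical
  let cell (S : Finset ι) : Set (ι → α) := {x | ({i | x i ∈ A} : Finset ι) = S}
  have cell_eq_pi (S : Finset ι) : cell S = Set.univ.pi fun i => if i ∈ S then A else Aᶜ := by
    ext x
    simp only [cell, Set.mem_ofPred_eq, Finset.ext_iff, mem_filter_univ, mem_univ_pi]
    refine forall_congr' fun i => ?_
    split_ifs with hi <;> simp [hi]
  have measurableSet_cell (S : Finset ι) : MeasurableSet (cell S) := by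
    rw [cell_eq_pi]
    exact .univ_pi fun i => by split_ifs; exacts [hA, hA.compl]
  have measure_cell (S : Finset ι) : Measure.pi (fun _ : ι => μ) (cell S) =
      μ A ^ #S * μ Aᶜ ^ (Fintype.card ι - #S) := by
    simp only [cell_eq_pi, Measure.pi_pi, apply_ite μ, prod_ite, prod_const]
    rw [← card_compl, filter_univ_mem, ← compl_filter, filter_univ_mem]
  have partition : {x : ι → α | #{i | x i ∈ A} = m} =
      ⋃ S ∈ powersetCard m (Finset.univ : Finset ι), cell S := by
    ext x
    simp [cell]
  rw [partition, measure_biUnion_finset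
    (fun S _ T _ hST => Set.disjoint_left.2 fun x hS hT => hST (hS.symm.trans hT))
    fun S _ => measurableSet_cell S]
  rw [sum_congr rfl fun S hS => by rw [measure_cell, (mem_powersetCard.1 hS).2]]
  simp

lemma ae_pi_injective {n : ℕ} {α : Type*} [MeasurableSpace α] [MeasurableEq α]
    (μ : Measure α) [SigmaFinite μ] [NullSingletonClass μ] :
    ∀ᵐ x ∂Measure.pi fun _ : Fin (n + 1) => μ, Function.Injective x := by
  have ae_ne (i : Fin (n + 1)) (j : Fin n) :
      ∀ᵐ x ∂Measure.pi fun _ : Fin (n + 1) => μ, x (i.succAbove j) ≠ x i := by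
    have ae_prod_ne : ∀ᵐ p ∂μ.prod (Measure.pi fun _ : Fin n => μ), p.2 j ≠ p.1 := by
      refine (Measure.ae_prod_iff_ae_ae ?_).2 (.of_forall (Measure.ae_eval_ne (fun _ => μ) j))
      exact (measurableSet_eq_fun (by fun_prop) (by fun_prop)).compl
    exact (measurePreserving_piFinSuccAbove (fun _ => μ) i).quasiMeasurePreserving.ae ae_prod_ne
  filter_upwards [ae_all_iff.2 fun i => ae_all_iff.2 (ae_ne i)] with x hx i j hij
  by_contra hne
  obtain ⟨l, rfl⟩ := Fin.exists_succAbove_eq hne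
  exact hx j l hij

section LinearOrder

variable {α : Type*} [LinearOrder α] [TopologicalSpace α] [OrderClosedTopology α]
  [SecondCountableTopology α] [MeasurableSpace α] [OpensMeasurableSpace α]

lemma measurableSet_mem_and_card_lt_eq {ι : Type*} [Fintype ι] (i : ι) {B : Set α}
    (hB : MeasurableSet B) (m : ℕ) :
    MeasurableSet {x : ι → α | x i ∈ B ∧ #{j | x j < x i} = m} :=
  (measurable_pi_apply i hB).inter <| measurable_card_filter
    (fun j => measurableSet_lt (measurable_pi_apply j) (measurable_pi_apply i))
    (measurableSet_singleton m)

lemma pi_setOf_mem_and_card_lt_eq (μ : Measure α) [SigmaFinite μ] {n : ℕ} (i : Fin (n + 1))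
    {B : Set α} (hB : MeasurableSet B) (m : ℕ) :
    Measure.pi (fun _ : Fin (n + 1) => μ) {x | x i ∈ B ∧ #{j | x j < x i} = m} =
      ∫⁻ t in B, n.choose m * (μ (Iio t) ^ m * μ (Ici t) ^ (n - m)) ∂μ := by
  have measurePreserving_succAbove := measurePreserving_piFinSuccAbove (fun _ : Fin (n + 1) => μ) i
  have rank_succAbove (x : Fin (n + 1) → α) :
      #{j | x j < x i} = #{j | x (i.succAbove j) < x i} := by
    simp only [card_filter, Fin.sum_univ_succAbove _ i, lt_self_iff_false, if_false, zero_add]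
  have preimage_eq : {x : Fin (n + 1) → α | x i ∈ B ∧ #{j | x j < x i} = m} =
      MeasurableEquiv.piFinSuccAbove (fun _ => α) i ⁻¹'
        {p | p.1 ∈ B ∧ #{j | p.2 j < p.1} = m} := by
    ext x
    simp only [rank_succAbove]
    rfl
  have measurableSet_rank :
      MeasurableSet {p : α × (Fin n → α) | p.1 ∈ B ∧ #{j | p.2 j < p.1} = m} :=
    (measurable_fst hB).inter <| measurable_card_filter
      (fun j => measurableSet_lt (by fun_prop) (by fun_prop)) (measurableSet_singleton m)
  rw [preimage_eq,
    measurePreserving_succAbove.measure_preimage measurableSet_rank.nullMeasurableSet,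
    Measure.prod_apply measurableSet_rank, ← lintegral_indicator hB]
  refine lintegral_congr fun t => ?_
  by_cases ht : t ∈ B
  · simpa [ht] using pi_setOf_card_mem_eq (ι := Fin n) μ (measurableSet_Iio (a := t)) m
  · simp [ht]

end LinearOrder

/-- The density with respect to an atomless measure `μ` of the law of the order statistic of
0-indexed rank `k` among `n + 1` independent draws from `μ`. The masses of `Iio t` and `Ici t`
replace `F t` and `1 - F t`, so that `μ` need not be a probability measure. -/
noncomputable def orderStatisticDensity (μ : Measure ℝ) {n : ℕ} (k : Fin (n + 1)) (t : ℝ) :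
    ENNReal :=
  ((n + 1) * n.choose k : ℕ) * (μ (Iio t) ^ (k : ℕ) * μ (Ici t) ^ (n - k))

lemma measurable_orderStatisticDensity (μ : Measure ℝ) {n : ℕ} (k : Fin (n + 1)) :
    Measurable (orderStatisticDensity μ k) := by
  have measurable_Iio : Measurable fun t => μ (Iio t) :=
    Monotone.measurable fun _ _ h => measure_mono (Iio_subset_Iio h)
  have measurable_Ici : Measurable fun t => μ (Ici t) :=
    Antitone.measurable fun _ _ h => measure_mono (Ici_subset_Ici.2 h)
  exact ((measurable_Iio.pow_const _).mul (measurable_Ici.pow_const _)).const_mul _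

lemma orderStatisticDensity_lt_top (μ : Measure ℝ) [IsFiniteMeasure μ] {n : ℕ} (k : Fin (n + 1))
    (t : ℝ) : orderStatisticDensity μ k t < ⊤ := by
  unfold orderStatisticDensity
  finiteness

lemma toReal_orderStatisticDensity (μ : Measure ℝ) [IsProbabilityMeasure μ] [NullSingletonClass μ]
    {n : ℕ} (k : Fin (n + 1)) (t : ℝ) :
    (orderStatisticDensity μ k t).toReal =
      (n + 1) * n.choose k * (μ.real (Iic t) ^ (k : ℕ) * (1 - μ.real (Iic t)) ^ (n - k)) := by
  have real_Iio : μ.real (Iio t) = μ.real (Iic t) := measureReal_congr Iio_ae_eq_Iic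
  have real_Ici : μ.real (Ici t) = 1 - μ.real (Iic t) := by
    rw [← real_Iio, ← probReal_compl_eq_one_sub measurableSet_Iio, compl_Iio]
  rw [← real_Ici, ← real_Iio]
  simp only [orderStatisticDensity, ENNReal.toReal_mul, ENNReal.toReal_pow, ENNReal.toReal_natCast,
    ← measureReal_def]
  push_cast
  rfl

lemma pi_map_kmin (μ : Measure ℝ) [SigmaFinite μ] [NullSingletonClass μ] {n : ℕ} (k : Fin (n + 1)) :
    (Measure.pi fun _ => μ).map (kmin · k) = μ.withDensity (orderStatisticDensity μ k) := by
  ext B hB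
  let E (i : Fin (n + 1)) : Set (Fin (n + 1) → ℝ) := {x | x i ∈ B ∧ #{j | x j < x i} = k}
  have preimage_ae_eq : (kmin · k) ⁻¹' B =ᵐ[Measure.pi fun _ => μ] ⋃ i, E i := by
    filter_upwards [ae_pi_injective μ] with x hx
    have mem_iff : x ∈ (kmin · k) ⁻¹' B ↔ x ∈ ⋃ i, E i := by
      simp only [E, Set.mem_preimage, Set.mem_iUnion, Set.mem_ofPred_eq, ← kmin_eq_apply_iff k hx]
      exact ⟨fun h => ⟨_, h, rfl⟩, fun ⟨_, hi, h⟩ => h ▸ hi⟩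
    exact propext mem_iff
  have aedisjoint : Pairwise (Function.onFun (AEDisjoint (Measure.pi fun _ => μ)) E) := by
    refine fun i j hij =>
      measure_mono_null (fun x ⟨hi, hj⟩ => fun hx => hij ?_) (ae_iff.1 (ae_pi_injective μ))
    exact hx (((kmin_eq_apply_iff k hx i).2 hi.2).symm.trans ((kmin_eq_apply_iff k hx j).2 hj.2))
  rw [Measure.map_apply (measurable_kmin k) hB, measure_congr preimage_ae_eq,
    measure_iUnion₀ aedisjoint fun i =>
      (measurableSet_mem_and_card_lt_eq i hB k).nullMeasurableSet,
    withDensity_apply _ hB]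
  simp only [E, pi_setOf_mem_and_card_lt_eq μ _ hB, tsum_fintype, sum_const, card_univ,
    Fintype.card_fin, nsmul_eq_mul]
  rw [← lintegral_const_mul' _ _ (by finiteness)]
  simp only [orderStatisticDensity, Nat.cast_mul, mul_assoc]

lemma integral_kmin_pi (μ : Measure ℝ) [IsProbabilityMeasure μ] [NullSingletonClass μ] {n : ℕ}
    (k : Fin (n + 1)) :
    ∫ x, kmin x k ∂(Measure.pi fun _ => μ) = (n + 1) * n.choose k *
      ∫ t, t * μ.real (Iic t) ^ (k : ℕ) * (1 - μ.real (Iic t)) ^ (n - k) ∂μ := by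
  calc ∫ x, kmin x k ∂(Measure.pi fun _ => μ)
    _ = ∫ t, t ∂(Measure.pi fun _ => μ).map (kmin · k) :=
      (integral_map (f := fun t => t) (measurable_kmin k).aemeasurable (by fun_prop)).symm
    _ = ∫ t, (orderStatisticDensity μ k t).toReal • t ∂μ := by
      rw [pi_map_kmin, integral_withDensity_eq_integral_toReal_smul
        (measurable_orderStatisticDensity μ k) (.of_forall (orderStatisticDensity_lt_top μ k))]
    _ = _ := by
      simp only [toReal_orderStatisticDensity, smul_eq_mul, ← integral_const_mul]
      congr with t
      ring

lemma integral_kmin_comp {Ω : Type*} [MeasurableSpace Ω] (P : Measure Ω) [IsProbabilityMeasure P]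
    {g : Ω → ℝ} (hg : AEMeasurable g P) (hatomless : ∀ t : ℝ, P {ω | g ω = t} = 0) {n : ℕ}
    (k : Fin (n + 1)) :
    ∫ ω : Fin (n + 1) → Ω, kmin (fun j => g (ω j)) k ∂(Measure.pi fun _ => P) =
      (n + 1) * n.choose k * ∫ ω, g ω * P.real {ω' | g ω' ≤ g ω} ^ (k : ℕ) *
        (1 - P.real {ω' | g ω' ≤ g ω}) ^ (n - k) ∂P := by
  have : IsProbabilityMeasure (P.map g) := Measure.isProbabilityMeasure_map hg
  have : NullSingletonClass (P.map g) :=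
    ⟨fun t => (Measure.map_apply_of_aemeasurable hg (measurableSet_singleton t)).trans
      (hatomless t)⟩
  have cdf_eq (t : ℝ) : (P.map g).real (Iic t) = P.real {ω | g ω ≤ t} :=
    map_measureReal_apply_of_aemeasurable hg measurableSet_Iic
  have cdf_mono : Monotone fun t => P.real {ω | g ω ≤ t} := fun s t hst =>
    measureReal_mono fun ω hω => hω.trans hst
  have cdf_measurable := cdf_mono.measurable
  have aemeasurable_comp :
      AEMeasurable (fun (ω : Fin (n + 1) → Ω) j => g (ω j)) (.pi fun _ => P) :=
    aemeasurable_pi_lambda _ fun j =>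
      hg.comp_quasiMeasurePreserving (Measure.quasiMeasurePreserving_eval (fun _ => P) j)
  rw [← integral_map aemeasurable_comp (measurable_kmin k).aestronglyMeasurable,
    Measure.pi_map_pi fun _ => hg, integral_kmin_pi]
  simp only [cdf_eq]
  rw [integral_map hg]
  exact ((measurable_id.mul (cdf_measurable.pow_const _)).mul
    ((cdf_measurable.const_sub 1).pow_const _)).aestronglyMeasurable

lemma succ_mul_choose_eq_factorial_div {K : Type*} [Field K] [CharZero K] {n m : ℕ} (h : m ≤ n) :
    (n + 1 : K) * n.choose m = (n + 1).factorial / (m.factorial * (n - m).factorial) := by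
  rw [Nat.cast_choose K h, Nat.factorial_succ, Nat.cast_mul, Nat.cast_succ, mul_div_assoc]

end OrderStatistics

/-- When the order statistic is not integrable, both sides are the junk value `0`. -/
theorem orderStatistic_expectation_general {Ω : Type*} [MeasurableSpace Ω]
    (P : Measure Ω) [IsProbabilityMeasure P] (g : Ω → ℝ) (hg : AEMeasurable g P)
    (N k : ℕ) (hk1 : 1 ≤ k) (hkN : k ≤ N) (hatomless : ∀ t : ℝ, P {ω | g ω = t} = 0) :
    ∫ ω : Fin N → Ω, kmin (fun j => g (ω j)) ⟨k - 1, Nat.sub_one_lt_of_le hk1 hkN⟩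
        ∂(Measure.pi fun _ : Fin N => P)
      = ((N.factorial : ℝ) / ((k - 1).factorial * (N - k).factorial))
        * ∫ ω, g ω * (P {ω' | g ω' ≤ g ω}).toReal ^ (k - 1)
            * (1 - (P {ω' | g ω' ≤ g ω}).toReal) ^ (N - k) ∂P := by
  obtain ⟨m, rfl⟩ := Nat.exists_eq_add_of_le' hk1
  obtain ⟨n, rfl⟩ := Nat.exists_eq_add_of_le' (hk1.trans hkN)
  simp only [Nat.add_sub_cancel, Nat.add_sub_add_right]
  rw [← succ_mul_choose_eq_factorial_div (Nat.le_of_succ_le_succ hkN)]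
  exact integral_kmin_comp P hg hatomless ⟨m, hkN⟩

/-- Theorem 2, order-statistic expectation identity.  For a probability space `(Ω, P)`,
an integrable measurable `g : Ω → ℝ` whose law is atomless, and integers `1 ≤ k ≤ N`,
the expectation of the `k`-th order statistic of `N` i.i.d. draws of `g` equals
`(N!/((k−1)!(N−k)!)) · ∫ g(ω)·F(g(ω))^{k−1}·(1−F(g(ω)))^{N−k} dP(ω)`, where
`F(t) = P(g ≤ t)` is the cumulative distribution function of `g`. -/
theorem orderStatistic_expectation {Ω : Type*} [MeasurableSpace Ω]
    (P : Measure Ω) [IsProbabilityMeasure P]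
    (g : Ω → ℝ) (hg : Measurable g) (hint : Integrable g P)
    (N k : ℕ) (hN : 1 ≤ N) (hk1 : 1 ≤ k) (hkN : k ≤ N)
    (hatomless : ∀ t : ℝ, P {ω | g ω = t} = 0) :
    ∫ ω : Fin N → Ω, kmin (fun j => g (ω j)) ⟨k - 1, by omega⟩
        ∂(Measure.pi fun _ : Fin N => P)
      = ((N.factorial : ℝ) / ((k - 1).factorial * (N - k).factorial))
        * ∫ ω, g ω * (P {ω' | g ω' ≤ g ω}).toReal ^ (k - 1)
            * (1 - (P {ω' | g ω' ≤ g ω}).toReal) ^ (N - k) ∂P :=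
  orderStatistic_expectation_general P g hg.aemeasurable N k hk1 hkN hatomless
end
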